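/- Let q ≥ 4, let B be a Baer subplane of PG(2,q²) tangent to ℓ∞ at T̄ = B ∩ ℓ∞, let m be a line of B through T̄, and let P̄ ∈ ℓ∞ with P̄ ≠ T̄. Then there exist q ℓ∞-Baer pencils with vertex P̄ whose affine point sets partition the affine points of PG(2,q²), and which partition the affine points of B into the affine points of q−1 F_q-conics contained in B and containing T̄ together with the affine points of the two lines m and m_P of B, where m_P is the unique line of B whose extension contains P̄. Moreover, for each of these q−1 F_q-conics C, the unique F_{q²}-conic C⁺ containing C passes through the point P̄. -/

import Mathlib

open scoped Classical
open Matrix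

noncomputable section

namespace BaerConics

/-- Points of the projective space `PG(n-1, K)` as projectivization of `Fin n → K`. -/
abbrev PP (K : Type) [Field K] (n : ℕ) : Type := Projectivization K (Fin n → K)

variable {K : Type} [Field K] {m n : ℕ}

/-- The (at most one) projective point determined by a vector:  empty if `v = 0`,
and the singleton `{[v]}` otherwise. -/
def projPt (v : Fin n → K) : Set (PP K n) :=
  {p | ∃ h : v ≠ 0, p = Projectivization.mk K v h}

/-- The set of projective points lying in a linear subspace. -/
def ptsOf (W : Submodule K (Fin n → K)) : Set (PP K n) :=
  {p | p.rep ∈ W}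

/-- The projective line through two points (as the set of points of the span). -/
def lineTh (P Q : PP K n) : Set (PP K n) :=
  ptsOf (Submodule.span K {P.rep, Q.rep})

/-- `X` is a projective flat of projective dimension `d`. -/
def IsFlat (d : ℕ) (X : Set (PP K n)) : Prop :=
  ∃ W : Submodule K (Fin n → K), Module.finrank K W = d + 1 ∧ X = ptsOf W

/-- Image of a set of vectors under the projective map induced by a matrix. -/
def mimg (M : Matrix (Fin m) (Fin n) K) (X : Set (Fin n → K)) : Set (PP K m) :=
  {p | ∃ v ∈ X, p ∈ projPt (M.mulVec v)}

/-- Coordinatewise application of a ring homomorphism to a vector. -/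
def mapVec {L : Type} [Field L] (σ : K →+* L) (v : Fin n → K) : Fin n → L :=
  fun i => σ (v i)

lemma mulVec_inj (M : Matrix (Fin n) (Fin n) K) (hM : IsUnit M.det) :
    Function.Injective M.mulVec := by
  intro a b hab
  have h := congrArg (fun v => M⁻¹.mulVec v) hab
  simpa [Matrix.mulVec_mulVec, Matrix.nonsing_inv_mul M hM] using h

/-- The projective transformation induced by an invertible matrix. -/
def pmap (M : Matrix (Fin n) (Fin n) K) (hM : IsUnit M.det) (p : PP K n) : PP K n :=
  Projectivization.mk K (M.mulVec p.rep) (by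
    intro h
    apply p.rep_nonzero
    have h0 : M.mulVec p.rep = M.mulVec 0 := by simpa [Matrix.mulVec_zero] using h
    exact mulVec_inj M hM h0)

/-- The map induced on projective points by the coordinatewise `q`-power map. -/
def frobPt (q : ℕ) (p : PP K n) : PP K n :=
  Projectivization.mk K (fun i => p.rep i ^ q) (by
    obtain ⟨i, hi⟩ := Function.ne_iff.mp p.rep_nonzero
    intro h
    exact pow_ne_zero q (by simpa using hi) (by simpa using congrFun h i))

/-- The line at infinity `z = 0` of `PG(2, K)`. -/
def linf (K : Type) [Field K] : Set (PP K 3) := {p | p.rep 2 = 0}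

/-- Coordinatewise application of the algebra map to a vector. -/
def algVec (F : Type) {K : Type} [Field F] [Field K] [Algebra F K] {n : ℕ}
    (v : Fin n → F) : Fin n → K := fun i => algebraMap F K (v i)

/-- Vectors representing the points of the standard Baer subline of `ℓ∞`. -/
def sublineVecs (F K : Type) [Field F] [Field K] [Algebra F K] : Set (Fin 3 → K) :=
  {v | ∃ θ : F, v = ![algebraMap F K θ, 1, 0]} ∪ {![1, 0, 0]}

/-- Nonzero vectors representing the points of `ℓ∞`. -/
def linfVecs (K : Type) [Field K] : Set (Fin 3 → K) := {v | v ≠ 0 ∧ v 2 = 0}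

/-- Vectors with all coordinates in (the image of) `F`, representing the canonical
Baer subplane. -/
def subplaneVecs (F K : Type) [Field F] [Field K] [Algebra F K] : Set (Fin 3 → K) :=
  {v | ∃ w : Fin 3 → F, w ≠ 0 ∧ v = algVec F w}

/-- Vectors of the standard conic with parameters in `S`. -/
def conicVecs {K : Type} [Field K] (S : Set K) : Set (Fin 3 → K) :=
  {v | ∃ θ ∈ S, v = ![1, θ, θ ^ 2]} ∪ {![0, 0, 1]}

/-- `b` is a Baer subline of the line `ℓ` of `PG(2,q²)`. -/
def IsBaerSublineOf (F : Type) {K : Type} [Field F] [Field K] [Algebra F K]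
    (b ℓ : Set (PP K 3)) : Prop :=
  ∃ M : Matrix (Fin 3) (Fin 3) K, IsUnit M.det ∧
    ℓ = mimg M (linfVecs K) ∧ b = mimg M (sublineVecs F K)

/-- `B` is a Baer subplane of `PG(2,q²)`. -/
def IsBaerSubplane (F : Type) {K : Type} [Field F] [Field K] [Algebra F K]
    (B : Set (PP K 3)) : Prop :=
  ∃ M : Matrix (Fin 3) (Fin 3) K, IsUnit M.det ∧ B = mimg M (subplaneVecs F K)

/-- `C` is the image under `PGL(3,K)` of the standard conic with parameters in `S`. -/
def IsConicOver {K : Type} [Field K] (S : Set K) (C : Set (PP K 3)) : Prop :=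
  ∃ M : Matrix (Fin 3) (Fin 3) K, IsUnit M.det ∧ C = mimg M (conicVecs S)

/-- An `F_q`-conic of `PG(2,q²)`: a nondegenerate conic of a Baer subplane. -/
def IsFqConic (F : Type) {K : Type} [Field F] [Field K] [Algebra F K]
    (C : Set (PP K 3)) : Prop :=
  IsConicOver (Set.range (algebraMap F K)) C

/-- An `F_{q²}`-conic of `PG(2,q²)`: a nondegenerate conic. -/
def IsFq2Conic {K : Type} [Field K] (C : Set (PP K 3)) : Prop :=
  IsConicOver (Set.univ : Set K) C

/-- `𝒦` is an `ℓ∞`-Baer pencil with vertex `P`. -/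
def IsLinfBaerPencil (F : Type) {K : Type} [Field F] [Field K] [Algebra F K]
    (𝒦 : Set (PP K 3)) (P : PP K 3) : Prop :=
  P ∈ linf K ∧ ∃ ℓ b : Set (PP K 3), IsBaerSublineOf F b ℓ ∧ P ∉ ℓ ∧
    (∃! X, X ∈ b ∩ linf K) ∧ 𝒦 = ⋃ X ∈ b, lineTh P X

/-- `m` is a line of the Baer subplane `B`, with extension (full line) `ℓ`. -/
def IsLineOfExt {K : Type} [Field K] (q : ℕ) (B m ℓ : Set (PP K 3)) : Prop :=
  IsFlat 1 ℓ ∧ m = B ∩ ℓ ∧ m.ncard = q + 1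

/-- `m` is a line of the Baer subplane `B`. -/
def IsLineOf {K : Type} [Field K] (q : ℕ) (B m : Set (PP K 3)) : Prop :=
  ∃ ℓ, IsLineOfExt q B m ℓ

/-- `P` and `Q` are conjugate with respect to the Baer subline `b` of `ℓ∞`. -/
def ConjWrtSubline (F : Type) {K : Type} [Field F] [Field K] [Algebra F K]
    (q : ℕ) (b : Set (PP K 3)) (P Q : PP K 3) : Prop :=
  ∃ (M : Matrix (Fin 3) (Fin 3) K) (hM : IsUnit M.det),
    mimg M (linfVecs K) = linf K ∧ b = mimg M (sublineVecs F K) ∧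
    ∃ P₀ : PP K 3, P = pmap M hM P₀ ∧ Q = pmap M hM (frobPt q P₀)

/-- A representative vector for the point `(δ,1,0)` (resp. `(1,0,0)`) of `ℓ∞`. -/
def ptInfVec {K : Type} [Field K] : Option K → Fin 3 → K
  | some δ => ![δ, 1, 0]
  | none => ![1, 0, 0]

lemma ptInfVec_ne {K : Type} [Field K] (t : Option K) : ptInfVec t ≠ 0 := by
  cases t with
  | none => intro h; have h0 := congrFun h 0; simp [ptInfVec] at h0
  | some δ => intro h; have h0 := congrFun h 1; simp [ptInfVec] at h0

/-- The point of `ℓ∞` with parameter `δ ∈ K ∪ {∞}`. -/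
def ptInf {K : Type} [Field K] (t : Option K) : PP K 3 :=
  Projectivization.mk K (ptInfVec t) (ptInfVec_ne t)

/-- The hyperplane at infinity `z = 0` of `PG(4, F)`. -/
def sinf (F : Type) [Field F] : Set (PP F 5) := {p | p.rep 4 = 0}

/-- Affine coordinates of the Bruck-Bose image of an affine point of `PG(2,q²)`. -/
def bbVec {F K : Type} [Field F] [Field K] (c0 c1 : K → F) (p : PP K 3) : Fin 5 → F :=
  ![c0 (p.rep 0 / p.rep 2), c1 (p.rep 0 / p.rep 2),
    c0 (p.rep 1 / p.rep 2), c1 (p.rep 1 / p.rep 2), 1]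

/-- The Bruck-Bose map (meaningful on affine points of `PG(2,q²)`). -/
def bb {F K : Type} [Field F] [Field K] (c0 c1 : K → F) (p : PP K 3) : PP F 5 :=
  Projectivization.mk F (bbVec c0 c1 p) (by
    intro h
    have h4 := congrFun h 4
    simp [bbVec] at h4)

/-- First spanning vector of the spread line with parameter `δ ∈ K ∪ {∞}`. -/
def spreadV1 {F K : Type} [Field F] [Field K] (c0 c1 : K → F) : Option K → Fin 5 → F
  | some δ => ![c0 δ, c1 δ, 1, 0, 0]
  | none => ![1, 0, 0, 0, 0]

/-- Second spanning vector of the spread line with parameter `δ ∈ K ∪ {∞}`. -/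
def spreadV2 {F K : Type} [Field F] [Field K] (c0 c1 : K → F) (t0 t1 : F) :
    Option K → Fin 5 → F
  | some δ => ![t0 * c1 δ, c0 δ + t1 * c1 δ, 0, 1, 0]
  | none => ![0, 1, 0, 0, 0]

/-- The line of the regular spread `S` with parameter `δ ∈ K ∪ {∞}`. -/
def spreadLine {F K : Type} [Field F] [Field K] (c0 c1 : K → F) (t0 t1 : F)
    (t : Option K) : Set (PP F 5) :=
  ptsOf (Submodule.span F {spreadV1 c0 c1 t, spreadV2 c0 c1 t0 t1 t})

/-- The extension `[T]⋆` of a spread line to `PG(4,q²)`. -/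
def extSpreadLine (F : Type) {K : Type} [Field F] [Field K] [Algebra F K]
    (c0 c1 : K → F) (t0 t1 : F) (t : Option K) : Set (PP K 5) :=
  ptsOf (Submodule.span K
    {algVec F (spreadV1 c0 c1 t), algVec F (spreadV2 c0 c1 t0 t1 t)})

/-- The `K`-extension of an `F`-subspace. -/
def extSub (F : Type) {K : Type} [Field F] [Field K] [Algebra F K] {n : ℕ}
    (W : Submodule F (Fin n → F)) : Submodule K (Fin n → K) :=
  Submodule.span K (algVec F '' (W : Set (Fin n → F)))

def A0v {K : Type} [Field K] (τ : K) (q : ℕ) : Fin 5 → K := ![τ ^ q, -1, 0, 0, 0]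
def A1v {K : Type} [Field K] (τ : K) (q : ℕ) : Fin 5 → K := ![0, 0, τ ^ q, -1, 0]
def B0v {K : Type} [Field K] (τ : K) : Fin 5 → K := ![τ, -1, 0, 0, 0]
def B1v {K : Type} [Field K] (τ : K) : Fin 5 → K := ![0, 0, τ, -1, 0]

/-- The transversal line `g` of the regular spread, in `PG(4,q²)`. -/
def gline {K : Type} [Field K] (τ : K) (q : ℕ) : Set (PP K 5) :=
  ptsOf (Submodule.span K {A0v τ q, A1v τ q})

/-- The conjugate transversal line `g^q` of the regular spread, in `PG(4,q²)`. -/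
def gqline {K : Type} [Field K] (τ : K) : Set (PP K 5) :=
  ptsOf (Submodule.span K {B0v τ, B1v τ})

/-- Representative vector of the point `T = δA₀ + A₁` of `g`. -/
def gptVec {K : Type} [Field K] (τ : K) (q : ℕ) : Option K → Fin 5 → K
  | some δ => δ • A0v τ q + A1v τ q
  | none => A0v τ q

/-- Representative vector of the conjugate point `T^q = δ^q A₀^q + A₁^q` of `g^q`. -/
def gqptVec {K : Type} [Field K] (τ : K) (q : ℕ) : Option K → Fin 5 → K
  | some δ => δ ^ q • B0v τ + B1v τ
  | none => B0v τ

lemma gptVec_ne {K : Type} [Field K] (τ : K) (q : ℕ) (t : Option K) :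
    gptVec τ q t ≠ 0 := by
  cases t with
  | none =>
      intro h
      have := congrFun h 1
      simp [gptVec, A0v] at this
  | some δ =>
      intro h
      have := congrFun h 3
      simp [gptVec, A0v, A1v] at this

lemma gqptVec_ne {K : Type} [Field K] (τ : K) (q : ℕ) (t : Option K) :
    gqptVec τ q t ≠ 0 := by
  cases t with
  | none =>
      intro h
      have := congrFun h 1
      simp [gqptVec, B0v] at this
  | some δ =>
      intro h
      have := congrFun h 3
      simp [gqptVec, B0v, B1v] at this

/-- The point of `g` corresponding to the point of `ℓ∞` with parameter `δ ∈ K ∪ {∞}`. -/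
def gpt {K : Type} [Field K] (τ : K) (q : ℕ) (t : Option K) : PP K 5 :=
  Projectivization.mk K (gptVec τ q t) (gptVec_ne τ q t)

/-- The point of `g^q` conjugate to `gpt τ q t`. -/
def gqpt {K : Type} [Field K] (τ : K) (q : ℕ) (t : Option K) : PP K 5 :=
  Projectivization.mk K (gqptVec τ q t) (gqptVec_ne τ q t)

/-- Evaluation of the quadratic form with matrix `M` at `v`. -/
def qeval {K : Type} [Field K] {n : ℕ} (M : Matrix (Fin n) (Fin n) K) (v : Fin n → K) : K :=
  v ⬝ᵥ M.mulVec v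

/-- Vectors of the standard twisted cubic (inside the hyperplane `x₄ = 0`)
with parameters in `S`. -/
def tcVecs {K : Type} [Field K] (S : Set K) : Set (Fin 5 → K) :=
  {v | ∃ θ ∈ S, v = ![1, θ, θ ^ 2, θ ^ 3, 0]} ∪ {![0, 0, 0, 1, 0]}

/-- Vectors of the standard 4-dimensional normal rational curve with parameters in `S`. -/
def nrcVecs {K : Type} [Field K] (S : Set K) : Set (Fin 5 → K) :=
  {v | ∃ θ ∈ S, v = ![1, θ, θ ^ 2, θ ^ 3, θ ^ 4]} ∪ {![0, 0, 0, 0, 1]}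

/-- `R` is a regulus of `Σ∞` in `PG(4,q)`. -/
def IsRegulus {F : Type} [Field F] (q : ℕ) (R : Set (Set (PP F 5))) : Prop :=
  R.ncard = q + 1 ∧
  (∀ ℓ ∈ R, IsFlat 1 ℓ ∧ ℓ ⊆ sinf F) ∧
  (∀ ℓ ∈ R, ∀ ℓ' ∈ R, ℓ ≠ ℓ' → ℓ ∩ ℓ' = ∅) ∧
  (∀ mℓ : Set (PP F 5), IsFlat 1 mℓ → mℓ ⊆ sinf F →
    (∃ ℓ₁ ∈ R, ∃ ℓ₂ ∈ R, ∃ ℓ₃ ∈ R, ℓ₁ ≠ ℓ₂ ∧ ℓ₁ ≠ ℓ₃ ∧ ℓ₂ ≠ ℓ₃ ∧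
      (mℓ ∩ ℓ₁).Nonempty ∧ (mℓ ∩ ℓ₂).Nonempty ∧ (mℓ ∩ ℓ₃).Nonempty) →
    ∀ ℓ ∈ R, (mℓ ∩ ℓ).Nonempty)



/-! ### Helper material -/

def co (N : Matrix (Fin 3) (Fin 3) K) (p : PP K 3) : Fin 3 → K := N⁻¹.mulVec p.rep

lemma mul_co (N : Matrix (Fin 3) (Fin 3) K) (hN : IsUnit N.det) (p : PP K 3) :
    N.mulVec (co N p) = p.rep := by
  simp [co, Matrix.mulVec_mulVec, Matrix.mul_nonsing_inv N hN]

lemma co_eq_of (N : Matrix (Fin 3) (Fin 3) K) (hN : IsUnit N.det) (p : PP K 3)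
    (v : Fin 3 → K) (h : p.rep = N.mulVec v) : co N p = v := by
  simp [co, h, Matrix.mulVec_mulVec, Matrix.nonsing_inv_mul N hN]

lemma co_ne (N : Matrix (Fin 3) (Fin 3) K) (hN : IsUnit N.det) (p : PP K 3) : co N p ≠ 0 := by
  intro h
  have := mul_co N hN p
  rw [h, Matrix.mulVec_zero] at this
  exact p.rep_nonzero this.symm

lemma mem_projPt_iff {n : ℕ} (v : Fin n → K) (hv : v ≠ 0) (p : PP K n) :
    p ∈ projPt v ↔ ∃ k : K, k ≠ 0 ∧ p.rep = k • v := by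
  constructor
  · rintro ⟨h, rfl⟩
    obtain ⟨a, ha⟩ := Projectivization.exists_smul_eq_mk_rep K v h
    exact ⟨a, a.ne_zero, ha.symm⟩
  · rintro ⟨k, hk, h⟩
    refine ⟨hv, ?_⟩
    rw [← p.mk_rep]
    rw [Projectivization.mk_eq_mk_iff']
    exact ⟨k, h.symm⟩

lemma mem_projPt_mul (N : Matrix (Fin 3) (Fin 3) K) (hN : IsUnit N.det) (v : Fin 3 → K)
    (hv : v ≠ 0) (p : PP K 3) :
    p ∈ projPt (N.mulVec v) ↔ ∃ k : K, k ≠ 0 ∧ co N p = k • v := by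
  have h0 : N.mulVec v ≠ 0 := by
    intro h
    exact hv (mulVec_inj N hN (by simpa using h))
  rw [mem_projPt_iff _ h0]
  constructor
  · rintro ⟨k, hk, h⟩
    exact ⟨k, hk, co_eq_of N hN p _ (by rw [h, Matrix.mulVec_smul])⟩
  · rintro ⟨k, hk, h⟩
    refine ⟨k, hk, ?_⟩
    rw [← mul_co N hN p, h, Matrix.mulVec_smul]

lemma ne_of_mem_projPt (N : Matrix (Fin 3) (Fin 3) K) (v : Fin 3 → K) (p : PP K 3)
    (h : p ∈ projPt (N.mulVec v)) : v ≠ 0 := by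
  rintro rfl
  obtain ⟨h, -⟩ := h
  simp at h

lemma co_ext (N : Matrix (Fin 3) (Fin 3) K) (hN : IsUnit N.det) (p p' : PP K 3) (k : K)
    (h : co N p = k • co N p') : p = p' := by
  rw [← p.mk_rep, ← p'.mk_rep, Projectivization.mk_eq_mk_iff']
  exact ⟨k, by rw [← mul_co N hN p, ← mul_co N hN p', h, Matrix.mulVec_smul]⟩

lemma exists_pt (N : Matrix (Fin 3) (Fin 3) K) (hN : IsUnit N.det) (v : Fin 3 → K)
    (hv : v ≠ 0) : ∃ p : PP K 3, ∃ k : K, k ≠ 0 ∧ co N p = k • v := by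
  have h0 : N.mulVec v ≠ 0 := by
    intro h
    exact hv (mulVec_inj N hN (by simpa using h))
  refine ⟨Projectivization.mk K _ h0, ?_⟩
  rw [← mem_projPt_mul N hN v hv]
  exact ⟨h0, rfl⟩

lemma mem_mimg_mul (N A : Matrix (Fin 3) (Fin 3) K) (hN : IsUnit N.det)
    (X : Set (Fin 3 → K)) (p : PP K 3) :
    p ∈ mimg (N * A) X ↔ ∃ v ∈ X, ∃ k : K, k ≠ 0 ∧ co N p = k • A.mulVec v := by
  unfold mimg
  constructor
  · rintro ⟨v, hv, h⟩
    rw [← Matrix.mulVec_mulVec] at h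
    have := ne_of_mem_projPt _ _ _ h
    exact ⟨v, hv, (mem_projPt_mul N hN _ this p).1 h⟩
  · rintro ⟨v, hv, k, hk, h⟩
    refine ⟨v, hv, ?_⟩
    rw [← Matrix.mulVec_mulVec]
    refine (mem_projPt_mul N hN _ ?_ p).2 ⟨k, hk, h⟩
    intro h0
    rw [h0, smul_zero] at h
    exact co_ne N hN p h

lemma mem_mimg (N : Matrix (Fin 3) (Fin 3) K) (hN : IsUnit N.det)
    (X : Set (Fin 3 → K)) (p : PP K 3) :
    p ∈ mimg N X ↔ ∃ v ∈ X, ∃ k : K, k ≠ 0 ∧ co N p = k • v := by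
  have := mem_mimg_mul N 1 hN X p
  simpa using this

lemma mem_lineTh (N : Matrix (Fin 3) (Fin 3) K) (hN : IsUnit N.det)
    (P X p : PP K 3) (v w : Fin 3 → K) (k k' : K) (hk : k ≠ 0) (hk' : k' ≠ 0)
    (hP : co N P = k • v) (hX : co N X = k' • w) :
    p ∈ lineTh P X ↔ ∃ a b : K, co N p = a • v + b • w := by
  unfold lineTh ptsOf
  rw [Set.mem_ofPred_eq, Submodule.mem_span_pair]
  constructor
  · rintro ⟨a, b, h⟩
    refine ⟨a * k, b * k', co_eq_of N hN p _ ?_⟩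
    rw [← h, ← mul_co N hN P, ← mul_co N hN X, hP, hX]
    simp [Matrix.mulVec_add, Matrix.mulVec_smul, smul_smul]
  · rintro ⟨a, b, h⟩
    refine ⟨a / k, b / k', ?_⟩
    rw [← mul_co N hN P, ← mul_co N hN X, hP, hX, ← mul_co N hN p, h]
    simp [Matrix.mulVec_add, Matrix.mulVec_smul, smul_smul, hk, hk']

/-- combinatorial wrap-up -/
lemma wrap {α F : Type} [Fintype F] [Zero F] (q : ℕ) (hq : Fintype.card F = q)
    (L B : Set α) (Kf Cf : F → Set α) (c₀ : Set α)
    (ha : ∀ A, A ∉ L → ∃! c, A ∈ Kf c)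
    (hb : ∀ c, ∃ A, A ∈ B ∧ A ∉ L ∧ A ∈ Kf c)
    (h0 : (Kf 0 ∩ B) \ L = c₀ \ L)
    (hC : ∀ c, c ≠ 0 → (Kf c ∩ B) \ L = Cf c \ L)
    (p1 p2 : Set α → Prop) (hp1 : ∀ c, p1 (Kf c)) (hp2 : ∀ c, c ≠ 0 → p2 (Cf c)) :
    ∃ (Ks : Finset (Set α)) (Cs : Finset (Set α))
      (cells : Finset (Set α)),
      cells = insert (c₀ \ L) (Cs.image (fun C => C \ L)) ∧
      Ks.card = q ∧
      (∀ 𝒦 ∈ Ks, p1 𝒦) ∧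
      (∀ A : α, A ∉ L → ∃! 𝒦, 𝒦 ∈ Ks ∧ A ∈ 𝒦) ∧
      Cs.card = q - 1 ∧
      (∀ C ∈ Cs, p2 C) ∧
      (∀ A ∈ B, A ∉ L → ∃! c, c ∈ cells ∧ A ∈ c) ∧
      (∀ c ∈ cells, c ⊆ B \ L) ∧
      (∀ 𝒦 ∈ Ks, ((𝒦 ∩ B) \ L) ∈ cells) ∧
      (∀ c ∈ cells, ∃ 𝒦 ∈ Ks, c = (𝒦 ∩ B) \ L) := by
  have hinj : ∀ c c', (Kf c ∩ B) \ L = (Kf c' ∩ B) \ L → c = c' := by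
    intro c c' h
    obtain ⟨A, hA, hL, hc⟩ := hb c
    have : A ∈ (Kf c' ∩ B) \ L := by rw [← h]; exact ⟨⟨hc, hA⟩, hL⟩
    exact (ha A hL).unique hc this.1.1
  have hcells : insert (c₀ \ L) (((Finset.univ.erase (0:F)).image Cf).image (fun C => C \ L))
      = Finset.univ.image (fun c => (Kf c ∩ B) \ L) := by
    ext s
    simp only [Finset.mem_insert, Finset.mem_image, Finset.mem_erase, Finset.mem_univ,
      true_and, and_true]
    constructor
    · rintro (rfl | ⟨_, ⟨c, hc, rfl⟩, rfl⟩)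
      · exact ⟨0, h0⟩
      · exact ⟨c, hC c hc⟩
    · rintro ⟨c, rfl⟩
      by_cases hc : c = 0
      · subst hc; exact Or.inl h0
      · exact Or.inr ⟨_, ⟨c, hc, rfl⟩, (hC c hc).symm⟩
  refine ⟨Finset.univ.image Kf, (Finset.univ.erase (0:F)).image Cf, _, rfl, ?_, ?_, ?_, ?_, ?_, ?_⟩
  · rw [Finset.card_image_of_injective, Finset.card_univ, hq]
    intro c c' h
    exact hinj c c' (by rw [h])
  · simp only [Finset.mem_image, Finset.mem_univ, true_and]
    rintro _ ⟨c, rfl⟩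
    exact hp1 c
  · intro A hA
    obtain ⟨c, hc, hu⟩ := ha A hA
    refine ⟨Kf c, ⟨by simp, hc⟩, ?_⟩
    rintro _ ⟨h1, h2⟩
    simp only [Finset.mem_image, Finset.mem_univ, true_and] at h1
    obtain ⟨c', rfl⟩ := h1
    rw [hu c' h2]
  · rw [Finset.card_image_of_injOn, Finset.card_erase_of_mem (Finset.mem_univ _),
      Finset.card_univ, hq]
    intro c hc c' hc' h
    simp at hc hc'
    exact hinj c c' (by rw [hC c hc, hC c' hc', h])
  · simp only [Finset.mem_image, Finset.mem_erase, Finset.mem_univ, and_true]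
    rintro _ ⟨c, hc, rfl⟩
    exact hp2 c hc
  · rw [hcells]
    simp only [Finset.mem_image, Finset.mem_univ, true_and]
    refine ⟨?_, ?_, ?_, ?_⟩
    · intro A hA hL
      obtain ⟨c, hc, hu⟩ := ha A hL
      refine ⟨_, ⟨⟨c, rfl⟩, ⟨⟨hc, hA⟩, hL⟩⟩, ?_⟩
      rintro _ ⟨⟨c', rfl⟩, h⟩
      rw [hu c' h.1.1]
    · rintro _ ⟨c, rfl⟩ x hx
      exact ⟨hx.1.2, hx.2⟩
    · rintro _ ⟨c, rfl⟩
      exact ⟨c, rfl⟩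
    · rintro _ ⟨c, rfl⟩
      exact ⟨_, ⟨c, rfl⟩, rfl⟩

lemma vec3_eq (u v : Fin 3 → K) : u = v ↔ u 0 = v 0 ∧ u 1 = v 1 ∧ u 2 = v 2 := by
  constructor
  · rintro rfl; simp
  · rintro ⟨h0, h1, h2⟩
    ext i; fin_cases i <;> assumption

section
variable {F : Type} [Field F] [Algebra F K]

def pen (F : Type) [Field F] [Algebra F K] (N : Matrix (Fin 3) (Fin 3) K) (ε e' : K) (c : F) :
    Set (PP K 3) :=
  {p | co N p 0 = ε * co N p 1 ∨ ∃ s : F, co N p 2 =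
    (algebraMap F K c + algebraMap F K s * e') * (co N p 0 - ε * co N p 1)}

lemma pen_isPencil (N : Matrix (Fin 3) (Fin 3) K) (hN : IsUnit N.det) (ε e' : K) (he' : e' ≠ 0)
    (hlin : ∀ p : PP K 3, p ∈ linf K ↔ co N p 0 = ε * co N p 1)
    (P : PP K 3) (k : K) (hk : k ≠ 0) (hP : co N P = k • ![ε, 1, 0]) (c : F) :
    IsLinfBaerPencil F (pen F N ε e' c) P := by
  set A : Matrix (Fin 3) (Fin 3) K := !![0, 1, 0; 0, 0, 1; e', algebraMap F K c, 0] with hA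
  have hAv : ∀ v : Fin 3 → K, A.mulVec v = ![v 1, v 2, e' * v 0 + algebraMap F K c * v 1] := by
    intro v
    rw [vec3_eq]
    simp [hA, Matrix.mulVec, dotProduct, Fin.sum_univ_three]
  have hAd : IsUnit A.det := by
    rw [isUnit_iff_ne_zero, Matrix.det_fin_three]
    simp [hA, he']
  have hb : ∀ p, p ∈ mimg (N * A) (sublineVecs F K) ↔
      (∃ θ : F, ∃ j : K, j ≠ 0 ∧
        co N p = j • ![1, 0, algebraMap F K c + algebraMap F K θ * e']) ∨
      ∃ j : K, j ≠ 0 ∧ co N p = j • ![0, 0, 1] := by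
    intro p
    rw [mem_mimg_mul N A hN]
    constructor
    · rintro ⟨v, (⟨θ, rfl⟩ | hv), j, hj, h⟩
      · left
        refine ⟨θ, j, hj, ?_⟩
        rw [h, hAv]
        simp
        left
        ring
      · rw [Set.mem_singleton_iff] at hv
        subst hv
        right
        refine ⟨j * e', mul_ne_zero hj he', ?_⟩
        rw [h, hAv]
        simp
    · rintro (⟨θ, j, hj, h⟩ | ⟨j, hj, h⟩)
      · refine ⟨_, Or.inl ⟨θ, rfl⟩, j, hj, ?_⟩
        rw [h, hAv]
        simp
        left
        ring
      · refine ⟨_, Or.inr rfl, j / e', div_ne_zero hj he', ?_⟩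
        rw [h, hAv]
        simp [he']
  have hPl : P ∈ linf K := by
    rw [hlin, hP]; simp; ring
  refine ⟨hPl, mimg (N * A) (linfVecs K), mimg (N * A) (sublineVecs F K),
    ⟨N * A, by rw [Matrix.det_mul]; exact hN.mul hAd, rfl, rfl⟩, ?_, ?_, ?_⟩
  · rw [mem_mimg_mul N A hN]
    rintro ⟨v, ⟨hv, hv2⟩, j, hj, h⟩
    rw [hP, hAv] at h
    have := congrFun h 1
    simp [hv2, hk] at this
  · obtain ⟨X, j, hj, hX⟩ := exists_pt N hN ![0, 0, 1] (by
      intro h; simpa using congrFun h 2)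
    refine ⟨X, ⟨(hb X).2 (Or.inr ⟨j, hj, hX⟩), ?_⟩, ?_⟩
    · rw [hlin, hX]; simp
    · rintro Y ⟨hY, hYl⟩
      rw [hlin] at hYl
      rcases (hb Y).1 hY with ⟨θ, j', hj', h⟩ | ⟨j', hj', h⟩
      · rw [h] at hYl
        simp at hYl
        exact absurd hYl hj'
      · apply co_ext N hN Y X (j' / j)
        rw [h, hX, smul_smul]
        simp [hj]
  · ext p
    simp only [Set.mem_iUnion]
    constructor
    · rintro (h | ⟨s, h⟩)
      · obtain ⟨X, j, hj, hX⟩ := exists_pt N hN ![0, 0, 1] (by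
          intro h; simpa using congrFun h 2)
        refine ⟨X, (hb X).2 (Or.inr ⟨j, hj, hX⟩), ?_⟩
        rw [mem_lineTh N hN P X p _ _ k j hk hj hP hX]
        refine ⟨co N p 1, co N p 2, ?_⟩
        rw [vec3_eq]
        simp [h, mul_comm]
      · obtain ⟨X, j, hj, hX⟩ := exists_pt N hN
          ![1, 0, algebraMap F K c + algebraMap F K s * e'] (by
          intro h; simpa using congrFun h 0)
        refine ⟨X, (hb X).2 (Or.inl ⟨s, j, hj, hX⟩), ?_⟩
        rw [mem_lineTh N hN P X p _ _ k j hk hj hP hX]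
        refine ⟨co N p 1, co N p 0 - ε * co N p 1, ?_⟩
        rw [vec3_eq]
        simp [h, mul_comm]
    · rintro ⟨X, hX, h⟩
      rcases (hb X).1 hX with ⟨θ, j, hj, hX⟩ | ⟨j, hj, hX⟩
      · rw [mem_lineTh N hN P X p _ _ k j hk hj hP hX] at h
        obtain ⟨x, y, h⟩ := h
        right
        refine ⟨θ, ?_⟩
        rw [h]
        simp
        ring
      · rw [mem_lineTh N hN P X p _ _ k j hk hj hP hX] at h
        obtain ⟨x, y, h⟩ := h
        left
        rw [h]
        simp
        ring

lemma pen_unique (N : Matrix (Fin 3) (Fin 3) K) (ε e' : K)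
    (hbas : ∀ x : K, ∃ a b : F, x = algebraMap F K a + algebraMap F K b * e')
    (hun : ∀ a b : F, algebraMap F K a + algebraMap F K b * e' = 0 → a = 0)
    (p : PP K 3) (hp : co N p 0 ≠ ε * co N p 1) : ∃! c : F, p ∈ pen F N ε e' c := by
  have hd : co N p 0 - ε * co N p 1 ≠ 0 := sub_ne_zero.2 hp
  obtain ⟨a, b, h⟩ := hbas (co N p 2 / (co N p 0 - ε * co N p 1))
  rw [div_eq_iff hd] at h
  refine ⟨a, Or.inr ⟨b, h⟩, ?_⟩
  rintro a' (h' | ⟨b', h'⟩)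
  · exact absurd h' hp
  · rw [h] at h'
    have h2 := mul_right_cancel₀ hd h'
    have := hun (a' - a) (b' - b) (by rw [map_sub, map_sub]; linear_combination -h2)
    exact sub_eq_zero.1 this

def cmat (c t n : F) : Matrix (Fin 3) (Fin 3) K :=
  !![1, 0, 0; 0, 1, 0; algebraMap F K c, - algebraMap F K (c * t), algebraMap F K (c * n)]

lemma mem_conic (N : Matrix (Fin 3) (Fin 3) K) (hN : IsUnit N.det) (c t n : F) (hc : c ≠ 0)
    (hn : n ≠ 0) (p : PP K 3) :
    p ∈ mimg (N * cmat c t n) (conicVecs (Set.range (algebraMap F K))) ↔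
      (∃ θ : F, ∃ j : K, j ≠ 0 ∧
        co N p = j • ![1, algebraMap F K θ, algebraMap F K (c * (1 - t * θ + n * θ ^ 2))]) ∨
      ∃ j : K, j ≠ 0 ∧ co N p = j • ![0, 0, 1] := by
  have hAv : ∀ v : Fin 3 → K, (cmat c t n).mulVec v = ![v 0, v 1, algebraMap F K c * v 0
      - algebraMap F K (c * t) * v 1 + algebraMap F K (c * n) * v 2] := by
    intro v
    rw [vec3_eq]
    simp [cmat, Matrix.mulVec, dotProduct, Fin.sum_univ_three]
    ring
  have hcn : algebraMap F K (c * n) ≠ 0 := by simp [hc, hn]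
  rw [mem_mimg_mul N _ hN]
  have key : ∀ θ : F, (cmat c t n).mulVec ![1, algebraMap F K θ, algebraMap F K θ ^ 2] =
      ![1, algebraMap F K θ, algebraMap F K (c * (1 - t * θ + n * θ ^ 2))] := by
    intro θ
    rw [hAv, vec3_eq]
    simp
    ring
  have key2 : (cmat c t n).mulVec ![0, 0, 1] = algebraMap F K (c * n) • ![(0:K), 0, 1] := by
    rw [hAv, vec3_eq]
    simp
  constructor
  · rintro ⟨v, (⟨_, ⟨θ, rfl⟩, rfl⟩ | hv), j, hj, h⟩
    · rw [key] at h
      exact Or.inl ⟨θ, j, hj, h⟩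
    · rw [Set.mem_singleton_iff] at hv
      subst hv
      rw [key2, smul_smul] at h
      exact Or.inr ⟨_, mul_ne_zero hj hcn, h⟩
  · rintro (⟨θ, j, hj, h⟩ | ⟨j, hj, h⟩)
    · exact ⟨_, Or.inl ⟨_, ⟨θ, rfl⟩, rfl⟩, j, hj, by rw [key, h]⟩
    · refine ⟨_, Or.inr rfl, j / algebraMap F K (c * n), div_ne_zero hj hcn, ?_⟩
      rw [key2, smul_smul, h, div_mul_cancel₀ _ hcn]

lemma cmat_det (c t n : F) (hc : c ≠ 0) (hn : n ≠ 0) :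
    IsUnit (cmat c t n : Matrix (Fin 3) (Fin 3) K).det := by
  rw [isUnit_iff_ne_zero, Matrix.det_fin_three]
  simp [cmat, hc, hn]

lemma cubic_zero [Fintype F] (hF : 4 ≤ Fintype.card F) (a b c d : K)
    (h : ∀ θ : F, a + b * algebraMap F K θ + c * algebraMap F K θ ^ 2
      + d * algebraMap F K θ ^ 3 = 0) (x : K) : a + b * x + c * x ^ 2 + d * x ^ 3 = 0 := by
  open Polynomial in
  have hp : (C a + C b * X + C c * X ^ 2 + C d * X ^ 3 : K[X]) = 0 := by
    refine Polynomial.eq_zero_of_natDegree_lt_card_of_eval_eq_zero _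
      (f := algebraMap F K) (algebraMap F K).injective ?_ ?_
    · intro θ
      simpa using h θ
    · refine lt_of_le_of_lt (b := 3) ?_ (by omega)
      compute_degree
  have := congrArg (Polynomial.eval x) hp
  simpa using this

lemma conic_ext [Fintype F] (hF : 4 ≤ Fintype.card F)
    (N : Matrix (Fin 3) (Fin 3) K) (hN : IsUnit N.det) (c t n : F) (hc : c ≠ 0)
    (hn : n ≠ 0) (ε : K) (hε : ε ≠ 0)
    (hq : ε ^ 2 - algebraMap F K t * ε + algebraMap F K n = 0)
    (P : PP K 3) (k : K) (hk : k ≠ 0) (hP : co N P = k • ![ε, 1, 0])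
    (D : Set (PP K 3)) (hD : IsFq2Conic D)
    (hCD : mimg (N * cmat c t n) (conicVecs (Set.range (algebraMap F K))) ⊆ D) : P ∈ D := by
  obtain ⟨M, hM, rfl⟩ := hD
  have hmem : ∀ p, p ∈ mimg M (conicVecs Set.univ) ↔ (co M p 1) ^ 2 = co M p 0 * co M p 2 := by
    intro p
    rw [mem_mimg M hM]
    constructor
    · rintro ⟨v, (⟨θ, -, rfl⟩ | hv), j, hj, h⟩
      · rw [h]; simp; ring
      · rw [Set.mem_singleton_iff] at hv
        subst hv
        rw [h]; simp
    · intro h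
      by_cases h0 : co M p 0 = 0
      · have h1 : co M p 1 = 0 := by simpa [h0] using h
        refine ⟨_, Or.inr rfl, co M p 2, ?_, ?_⟩
        · intro h2
          exact co_ne M hM p (by rw [vec3_eq]; simp [h0, h1, h2])
        · rw [vec3_eq]; simp [h0, h1]
      · refine ⟨_, Or.inl ⟨co M p 1 / co M p 0, trivial, rfl⟩, co M p 0, h0, ?_⟩
        rw [vec3_eq]
        simp
        constructor
        · field_simp
        · field_simp
          rw [h]; ring
  set G := M⁻¹ * N with hG
  have hco : ∀ (p : PP K 3), co M p = G.mulVec (co N p) := by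
    intro p
    rw [hG, ← Matrix.mulVec_mulVec, mul_co N hN]
    rfl
  have hmem2 : ∀ (p : PP K 3) (j : K) (v : Fin 3 → K), j ≠ 0 → co N p = j • v →
      (p ∈ mimg M (conicVecs Set.univ) ↔
      (G 1 0 * v 0 + G 1 1 * v 1 + G 1 2 * v 2) ^ 2 =
      (G 0 0 * v 0 + G 0 1 * v 1 + G 0 2 * v 2) * (G 2 0 * v 0 + G 2 1 * v 1 + G 2 2 * v 2)) := by
    intro p j v hj h
    rw [hmem, hco, h, Matrix.mulVec_smul]
    simp only [Pi.smul_apply, smul_eq_mul, Matrix.mulVec, dotProduct, Fin.sum_univ_three]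
    constructor
    · intro h
      have hj2 : j ^ 2 ≠ 0 := pow_ne_zero _ hj
      apply mul_left_cancel₀ hj2
      linear_combination h
    · intro h
      linear_combination j ^ 2 * h
  have hT : G 1 2 ^ 2 = G 0 2 * G 2 2 := by
    obtain ⟨p, j, hj, h⟩ := exists_pt N hN ![0, 0, 1] (by
      intro h; simpa using congrFun h 2)
    have := (hmem2 p j _ hj h).1 (hCD ((mem_conic N hN c t n hc hn p).2 (Or.inr ⟨j, hj, h⟩)))
    simpa using this
  have hθ : ∀ θ : F, ∀ v : Fin 3 → K,
      v = ![1, algebraMap F K θ, algebraMap F K (c * (1 - t * θ + n * θ ^ 2))] →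
      (G 1 0 * v 0 + G 1 1 * v 1 + G 1 2 * v 2) ^ 2 =
      (G 0 0 * v 0 + G 0 1 * v 1 + G 0 2 * v 2) * (G 2 0 * v 0 + G 2 1 * v 1 + G 2 2 * v 2) := by
    rintro θ v rfl
    obtain ⟨p, j, hj, h⟩ := exists_pt N hN
      ![1, algebraMap F K θ, algebraMap F K (c * (1 - t * θ + n * θ ^ 2))] (by
      intro h; simpa using congrFun h 0)
    exact (hmem2 p j _ hj h).1 (hCD ((mem_conic N hN c t n hc hn p).2 (Or.inl ⟨θ, j, hj, h⟩)))
  replace hθ := fun θ => hθ θ _ rfl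
  rw [hmem2 P k _ hk hP]
  simp only [Matrix.cons_val_zero, Matrix.cons_val_one, Matrix.cons_val,
    map_mul, map_add, map_sub, map_one, map_pow] at hθ ⊢
  set C := algebraMap F K c
  set t' := algebraMap F K t
  set n' := algebraMap F K n
  -- quadratic form coefficients
  set q00 := G 1 0 ^ 2 - G 0 0 * G 2 0 with hq00
  set q11 := G 1 1 ^ 2 - G 0 1 * G 2 1 with hq11
  set q01 := 2 * G 1 0 * G 1 1 - G 0 0 * G 2 1 - G 0 1 * G 2 0 with hq01
  set q02 := 2 * G 1 0 * G 1 2 - G 0 0 * G 2 2 - G 0 2 * G 2 0 with hq02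
  set q12 := 2 * G 1 1 * G 1 2 - G 0 1 * G 2 2 - G 0 2 * G 2 1 with hq12
  have hcub := cubic_zero (F := F) hF (q00 + C * q02) (q01 - C * t' * q02 + C * q12)
    (q11 + C * n' * q02 - C * t' * q12) (C * n' * q12) (by
      intro θ
      have h := hθ θ
      set x := algebraMap F K θ
      rw [hq00, hq11, hq01, hq02, hq12]
      linear_combination h - (C * (1 - t' * x + n' * x ^ 2)) ^ 2 * hT) ε⁻¹
  have h1 : 1 - t' * ε⁻¹ + n' * ε⁻¹ ^ 2 = 0 := by
    field_simp
    linear_combination hq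
  have h3 : q00 + q01 * ε⁻¹ + q11 * ε⁻¹ ^ 2 = 0 := by
    linear_combination hcub - (C * q02 + C * q12 * ε⁻¹) * h1
  have h4 : q00 * ε ^ 2 + q01 * ε + q11 = 0 := by
    field_simp at h3
    linear_combination h3
  rw [hq00, hq11, hq01] at h4
  linear_combination h4
end

section
variable {F : Type} [Field F] [Algebra F K]

lemma span_pair_finrank {n : ℕ} (a b : Fin n → K) (ha : a ≠ 0) (h : ∀ r : K, r • a ≠ b) :
    Module.finrank K (Submodule.span K {a, b}) = 2 := by
  have hl : LinearIndependent K ![a, b] := (LinearIndependent.pair_iff' ha).2 h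
  have := finrank_span_eq_card hl
  have hr : Set.range ![a, b] = {a, b} := by
    ext x
    simp [eq_comm, or_comm]
  rw [hr] at this
  simpa using this

lemma mem_sub (N : Matrix (Fin 3) (Fin 3) K) (hN : IsUnit N.det) (p : PP K 3) :
    p ∈ mimg N (subplaneVecs F K) ↔ ∃ w : Fin 3 → F, w ≠ 0 ∧ ∃ j : K, j ≠ 0 ∧
      co N p = j • algVec F w := by
  rw [mem_mimg N hN]
  constructor
  · rintro ⟨_, ⟨w, hw, rfl⟩, h⟩
    exact ⟨w, hw, h⟩
  · rintro ⟨w, hw, h⟩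
    exact ⟨_, ⟨w, hw, rfl⟩, h⟩

lemma scal (ε e' : K) (t n : F) (he' : e' ≠ 0)
    (htr : ε + e' = algebraMap F K t) (hnm : ε * e' = algebraMap F K n)
    (hun : ∀ a b : F, algebraMap F K a + algebraMap F K b * e' = 0 → a = 0)
    (c x y z : F) (hxy : algebraMap F K x ≠ ε * algebraMap F K y) :
    (∃ s : F, algebraMap F K z = (algebraMap F K c + algebraMap F K s * e') *
      (algebraMap F K x - ε * algebraMap F K y)) ↔
      z * x = c * (x ^ 2 - t * x * y + n * y ^ 2) := by
  have hN : algebraMap F K (x ^ 2 - t * x * y + n * y ^ 2) =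
      (algebraMap F K x - ε * algebraMap F K y) * (algebraMap F K x - e' * algebraMap F K y) := by
    simp only [map_add, map_sub, map_mul, map_pow, ← htr, ← hnm]
    ring
  constructor
  · rintro ⟨s, hs⟩
    have := hun (z * x - c * (x ^ 2 - t * x * y + n * y ^ 2))
      (- (z * y) - s * (x ^ 2 - t * x * y + n * y ^ 2)) (by
        rw [map_sub, map_sub, map_mul _ c, map_mul _ s, hN]
        simp only [map_mul, map_neg]
        linear_combination (algebraMap F K x - e' * algebraMap F K y) * hs)
    exact sub_eq_zero.1 this
  · intro h
    have h1 : algebraMap F K x - ε * algebraMap F K y ≠ 0 := sub_ne_zero.2 hxy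
    have h2 : algebraMap F K x - e' * algebraMap F K y ≠ 0 := by
      intro h0
      have hx : x = 0 := hun x (-y) (by rw [map_neg]; linear_combination h0)
      subst hx
      have hy : algebraMap F K y = 0 := by simpa [he'] using h0
      apply hxy
      rw [hy]; simp
    have hN0 : x ^ 2 - t * x * y + n * y ^ 2 ≠ 0 := by
      intro h0
      rw [h0, map_zero] at hN
      exact mul_ne_zero h1 h2 hN.symm
    refine ⟨- (z * y) / (x ^ 2 - t * x * y + n * y ^ 2), ?_⟩
    have hc : c = z * x / (x ^ 2 - t * x * y + n * y ^ 2) := by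
      rw [eq_div_iff hN0]; exact h.symm
    rw [hc, map_div₀, map_div₀, hN]
    simp only [map_neg, map_mul]
    have h2' : algebraMap F K x - algebraMap F K y * e' ≠ 0 := by rwa [mul_comm e'] at h2
    field_simp
    ring

lemma cell_iff (N : Matrix (Fin 3) (Fin 3) K) (hN : IsUnit N.det)
    (ε e' : K) (t n : F) (he' : e' ≠ 0)
    (htr : ε + e' = algebraMap F K t) (hnm : ε * e' = algebraMap F K n)
    (hun : ∀ a b : F, algebraMap F K a + algebraMap F K b * e' = 0 → a = 0)
    (hlin : ∀ p : PP K 3, p ∈ linf K ↔ co N p 0 = ε * co N p 1) (c : F) (p : PP K 3) :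
    p ∈ (pen F N ε e' c ∩ mimg N (subplaneVecs F K)) \ linf K ↔
    ∃ (w : Fin 3 → F) (j : K), j ≠ 0 ∧ co N p = j • algVec F w ∧
      algebraMap F K (w 0) ≠ ε * algebraMap F K (w 1) ∧
      w 2 * w 0 = c * (w 0 ^ 2 - t * w 0 * w 1 + n * w 1 ^ 2) := by
  constructor
  · rintro ⟨⟨h1, h2⟩, h3⟩
    rw [hlin] at h3
    obtain ⟨w, hw, j, hj, h⟩ := (mem_sub N hN p).1 h2
    rcases h1 with h1 | ⟨s, h1⟩
    · exact absurd h1 h3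
    rw [h] at h1 h3
    simp only [Pi.smul_apply, smul_eq_mul, algVec] at h1 h3
    have h4 : algebraMap F K (w 0) ≠ ε * algebraMap F K (w 1) := by
      intro h; apply h3; rw [h]; ring
    refine ⟨w, j, hj, h, h4, ?_⟩
    rw [← scal ε e' t n he' htr hnm hun c _ _ _ h4]
    refine ⟨s, ?_⟩
    apply mul_left_cancel₀ hj
    linear_combination h1
  · rintro ⟨w, j, hj, h, h4, h5⟩
    rw [← scal ε e' t n he' htr hnm hun c _ _ _ h4] at h5
    obtain ⟨s, h5⟩ := h5
    refine ⟨⟨Or.inr ⟨s, ?_⟩, (mem_sub N hN p).2 ⟨w, ?_, j, hj, h⟩⟩, ?_⟩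
    · rw [h]
      simp only [Pi.smul_apply, smul_eq_mul, algVec]
      linear_combination j * h5
    · rintro rfl
      simp at h4
    · rw [hlin, h]
      simp only [Pi.smul_apply, smul_eq_mul, algVec]
      intro h6
      apply h4
      apply mul_left_cancel₀ hj
      linear_combination h6

lemma ell_flat (N : Matrix (Fin 3) (Fin 3) K) (hN : IsUnit N.det) :
    IsFlat 1 {p : PP K 3 | co N p 2 = 0} := by
  refine ⟨Submodule.span K {N.mulVec ![1, 0, 0], N.mulVec ![0, 1, 0]}, ?_, ?_⟩
  · apply span_pair_finrank
    · intro h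
      have := mulVec_inj N hN (a₁ := ![1, 0, 0]) (a₂ := 0) (by simpa using h)
      simpa using congrFun this 0
    · intro r h
      rw [← Matrix.mulVec_smul] at h
      have := mulVec_inj N hN h
      simpa using congrFun this 1
  · ext p
    unfold ptsOf
    simp only [Set.mem_ofPred_eq]
    rw [Submodule.mem_span_pair]
    constructor
    · intro h
      refine ⟨co N p 0, co N p 1, ?_⟩
      rw [← mul_co N hN p, ← Matrix.mulVec_smul, ← Matrix.mulVec_smul, ← Matrix.mulVec_add]
      congr 1
      rw [vec3_eq]
      simp [h]
    · rintro ⟨a, b, h⟩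
      rw [← Matrix.mulVec_smul, ← Matrix.mulVec_smul, ← Matrix.mulVec_add] at h
      rw [co_eq_of N hN p _ h.symm]
      simp

lemma ell_card [Fintype F] (N : Matrix (Fin 3) (Fin 3) K) (hN : IsUnit N.det) :
    (mimg N (subplaneVecs F K) ∩ {p : PP K 3 | co N p 2 = 0}).ncard = Fintype.card F + 1 := by
  let v : Option F → Fin 3 → F := fun o => o.elim ![0, 1, 0] (fun θ => ![1, θ, 0])
  have hv : ∀ o, v o ≠ 0 := by
    rintro (_ | θ) h
    · simpa [v] using congrFun h 1
    · simpa [v] using congrFun h 0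
  have hv' : ∀ o, algVec F (v o) ≠ (0 : Fin 3 → K) := by
    intro o h
    apply hv o
    ext i
    simpa [algVec] using congrFun h i
  choose f k hk hf using fun o => exists_pt N hN _ (hv' o)
  have hinj : Function.Injective f := by
    intro o o' h
    have h2 := hf o
    rw [h, hf o'] at h2
    have e0 := congrFun h2 0
    have e1 := congrFun h2 1
    have k1 := hk o
    have k2 := hk o'
    clear hv hv' hf h2 h
    rcases o with _ | θ <;> rcases o' with _ | θ'
    · rfl
    · simp [v, algVec, k2] at e0
    · simp [v, algVec] at e0
      exact absurd e0.symm k1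
    · simp [v, algVec] at e0 e1
      rw [e0] at e1
      simpa [k1, eq_comm] using e1
  have hr : mimg N (subplaneVecs F K) ∩ {p : PP K 3 | co N p 2 = 0} = Set.range f := by
    ext p
    constructor
    · rintro ⟨h1, h2⟩
      obtain ⟨w, hw, j, hj, h⟩ := (mem_sub N hN p).1 h1
      rw [Set.mem_ofPred_eq, h] at h2
      have h2' : w 2 = 0 := by simpa [algVec, hj] using h2
      by_cases h0 : w 0 = 0
      · refine ⟨none, ?_⟩
        symm
        apply co_ext N hN _ _ (j * algebraMap F K (w 1) / k none)
        rw [h, hf, smul_smul, div_mul_cancel₀ _ (hk none), vec3_eq]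
        simp [algVec, v, h0, h2']
      · refine ⟨some (w 1 / w 0), ?_⟩
        symm
        apply co_ext N hN _ _ (j * algebraMap F K (w 0) / k (some (w 1 / w 0)))
        have h0' : algebraMap F K (w 0) ≠ 0 := by simpa using h0
        rw [h, hf, smul_smul, div_mul_cancel₀ _ (hk _), vec3_eq]
        simp [algVec, v, h2']
        field_simp
    · rintro ⟨o, rfl⟩
      refine ⟨(mem_sub N hN _).2 ⟨v o, hv o, k o, hk o, hf o⟩, ?_⟩
      rw [Set.mem_ofPred_eq, hf]
      rcases o with _ | θ <;> simp [v, algVec]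
  rw [hr, ← Set.image_univ, Set.ncard_image_of_injective _ hinj, Set.ncard_univ]
  simp

end

section
variable {F : Type} [Field F] [Algebra F K]

lemma rep_ne {n : ℕ} (p p' : PP K n) (h : p ≠ p') (r : K) : r • p.rep ≠ p'.rep := by
  intro h'
  apply h
  symm
  rw [← p.mk_rep, ← p'.mk_rep, Projectivization.mk_eq_mk_iff']
  exact ⟨r, h'⟩

lemma coords_aux (q : ℕ) (M : Matrix (Fin 3) (Fin 3) K) (hM : IsUnit M.det)
    (B : Set (PP K 3)) (hB : B = mimg M (subplaneVecs F K))
    (T : PP K 3) (hT : B ∩ linf K = {T})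
    (m ℓ : Set (PP K 3)) (hm : IsLineOfExt q B m ℓ) (hTm : T ∈ m)
    (P : PP K 3) (hP : P ∈ linf K) (hPT : P ≠ T)
    (wT : Fin 3 → F) (kT : K) (hkT : kT ≠ 0) (hwT : co M T = kT • algVec F wT)
    (hker : ∀ w : Fin 3 → F, (M.mulVec (algVec F w)) 2 = 0 → ∃ a : F, w = a • wT)
    (S : PP K 3) (hSm : S ∈ m) (hST : S ≠ T)
    (e1 e2 : Fin 3 → F) (ε k : K) (hk : k ≠ 0) (hε : ε ∉ Set.range (algebraMap F K))
    (hPe : co M P = k • (ε • algVec F e1 + algVec F e2))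
    (kS : K) (hkS : kS ≠ 0) (γ : F) (hwS : co M S = kS • algVec F (e2 + γ • wT)) :
    ∃ N : Matrix (Fin 3) (Fin 3) K, IsUnit N.det ∧
      B = mimg N (subplaneVecs F K) ∧
      (∀ p : PP K 3, p ∈ linf K ↔ co N p 0 = ε * co N p 1) ∧
      (∃ k : K, k ≠ 0 ∧ co N P = k • ![ε, 1, 0]) ∧
      (∃ k : K, k ≠ 0 ∧ co N T = k • ![0, 0, 1]) ∧
      (∀ p, p ∈ m ↔ p ∈ B ∧ co N p 0 = 0) := by
  have hwT0 : wT ≠ 0 := by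
    rintro rfl
    apply co_ne M hM T
    rw [hwT, vec3_eq]; simp [algVec]
  have hTl : T ∈ linf K := by
    have : T ∈ B ∩ linf K := by rw [hT]; rfl
    exact this.2
  set g1 := (M.mulVec (algVec F e1)) 2 with hg1
  set g2 := (M.mulVec (algVec F e2)) 2 with hg2
  have hgT : (M.mulVec (algVec F wT)) 2 = 0 := by
    have h1 : T.rep 2 = 0 := hTl
    rw [← mul_co M hM T, hwT, Matrix.mulVec_smul] at h1
    simpa [hkT] using h1
  have hgP : ε * g1 + g2 = 0 := by
    have h1 : P.rep 2 = 0 := hP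
    rw [← mul_co M hM P, hPe, Matrix.mulVec_smul, Matrix.mulVec_add, Matrix.mulVec_smul] at h1
    simpa [hk] using h1
  have hg1n : g1 ≠ 0 := by
    intro h
    have h2 : g2 = 0 := by rw [h] at hgP; simpa using hgP
    obtain ⟨a, ha⟩ := hker e1 h
    obtain ⟨b, hb⟩ := hker e2 h2
    apply hPT
    apply co_ext M hM P T (k * (ε * algebraMap F K a + algebraMap F K b) / kT)
    rw [hPe, hwT, smul_smul, div_mul_cancel₀ _ hkT, ha, hb, vec3_eq]
    simp [algVec]
    refine ⟨?_, ?_, ?_⟩ <;> ring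
  set E : Matrix (Fin 3) (Fin 3) F := Matrix.of fun i j => ![e1, e2, wT] j i with hE
  have hEv : ∀ w : Fin 3 → F, E.mulVec w = w 0 • e1 + w 1 • e2 + w 2 • wT := by
    intro w
    ext i
    simp [hE, Matrix.mulVec, dotProduct, Fin.sum_univ_three, mul_comm]
  set E' : Matrix (Fin 3) (Fin 3) K := E.map (algebraMap F K) with hE'
  have hE'v : ∀ w : Fin 3 → K, E'.mulVec w =
      w 0 • algVec F e1 + w 1 • algVec F e2 + w 2 • algVec F wT := by
    intro w
    ext i
    simp [hE', hE, Matrix.mulVec, dotProduct, Fin.sum_univ_three, mul_comm, algVec]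
  have hEE : ∀ w : Fin 3 → F, E'.mulVec (algVec F w) = algVec F (E.mulVec w) := by
    intro w
    rw [hE'v, hEv, vec3_eq]
    simp [algVec, Algebra.smul_def]
  have hEd : IsUnit E.det := by
    rw [isUnit_iff_ne_zero]
    intro h
    obtain ⟨w, hw, hw0⟩ := Matrix.exists_mulVec_eq_zero_iff.2 h
    have h1 : (M.mulVec (E'.mulVec (algVec F w))) 2 = 0 := by
      rw [hEE, hw0]
      have : (algVec F (0 : Fin 3 → F) : Fin 3 → K) = 0 := by rw [vec3_eq]; simp [algVec]
      rw [this]; simp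
    rw [hE'v, Matrix.mulVec_add, Matrix.mulVec_add, Matrix.mulVec_smul, Matrix.mulVec_smul,
      Matrix.mulVec_smul] at h1
    simp only [Pi.add_apply, Pi.smul_apply, smul_eq_mul, ← hg1, ← hg2, hgT, algVec] at h1
    have h2 : (algebraMap F K (w 0) - ε * algebraMap F K (w 1)) * g1 = 0 := by
      linear_combination h1 - algebraMap F K (w 1) * hgP
    have h3 := (mul_eq_zero.1 h2).resolve_right hg1n
    have hw1 : w 1 = 0 := by
      by_contra hne
      apply hε
      have : algebraMap F K (w 1) ≠ 0 := by simpa using hne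
      refine ⟨w 0 / w 1, ?_⟩
      rw [map_div₀, div_eq_iff this]
      linear_combination h3
    have hw00 : w 0 = 0 := by simpa [hw1] using h3
    rw [hEv, hw1, hw00] at hw0
    have hw2 : w 2 = 0 := by
      simpa [hwT0] using hw0
    exact hw (by rw [vec3_eq]; simp [hw1, hw00, hw2])
  have hE'd : IsUnit E'.det := by
    have : E'.det = algebraMap F K E.det := by
      rw [hE', RingHom.map_det]; rfl
    rw [this]
    exact hEd.map _
  have hN : IsUnit (M * E').det := by rw [Matrix.det_mul]; exact hM.mul hE'd
  have hcoN : ∀ p v, co M p = E'.mulVec v → co (M * E') p = v := by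
    intro p v h
    apply co_eq_of _ hN
    rw [← mul_co M hM p, h, Matrix.mulVec_mulVec]
  have hcoM : ∀ p, co M p = E'.mulVec (co (M * E') p) := by
    intro p
    apply co_eq_of _ hM
    rw [Matrix.mulVec_mulVec, mul_co _ hN]
  have hPN : co (M * E') P = k • ![ε, 1, 0] := by
    apply hcoN
    rw [hPe, hE'v]
    simp [smul_smul]
  have hTN : co (M * E') T = kT • ![0, 0, 1] := by
    apply hcoN
    rw [hwT, hE'v]
    simp
  have hSN : co (M * E') S = kS • ![0, 1, algebraMap F K γ] := by
    apply hcoN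
    rw [hwS, hE'v, vec3_eq]
    simp [algVec]
    refine ⟨?_, ?_, ?_⟩ <;> ring
  refine ⟨M * E', hN, ?_, ?_, ⟨k, hk, hPN⟩, ⟨kT, hkT, hTN⟩, ?_⟩
  · rw [hB]
    ext p
    rw [mem_sub M hM, mem_sub _ hN]
    constructor
    · rintro ⟨w, hw, j, hj, h⟩
      have hww : E.mulVec (E⁻¹.mulVec w) = w := by
        rw [Matrix.mulVec_mulVec, Matrix.mul_nonsing_inv E hEd, Matrix.one_mulVec]
      refine ⟨E⁻¹.mulVec w, ?_, j, hj, ?_⟩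
      · intro h0
        rw [h0, Matrix.mulVec_zero] at hww
        exact hw hww.symm
      · apply hcoN
        rw [Matrix.mulVec_smul, hEE, hww, h]
    · rintro ⟨w, hw, j, hj, h⟩
      refine ⟨E.mulVec w, ?_, j, hj, ?_⟩
      · intro h0
        exact hw (mulVec_inj E hEd (by simpa using h0))
      · rw [hcoM, h, Matrix.mulVec_smul, hEE]
  · intro p
    have h1 : p ∈ linf K ↔ p.rep 2 = 0 := Iff.rfl
    rw [h1, ← mul_co M hM p, hcoM p, hE'v, Matrix.mulVec_add, Matrix.mulVec_add,
      Matrix.mulVec_smul, Matrix.mulVec_smul, Matrix.mulVec_smul]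
    simp only [Pi.add_apply, Pi.smul_apply, smul_eq_mul, ← hg1, ← hg2, hgT]
    constructor
    · intro h
      apply mul_right_cancel₀ hg1n
      linear_combination h - co (M * E') p 1 * hgP
    · intro h
      linear_combination g1 * h + co (M * E') p 1 * hgP
  · obtain ⟨⟨W, hW, hℓ⟩, hmB, -⟩ := hm
    have hTW : T.rep ∈ W := by
      rw [hmB, hℓ] at hTm; exact hTm.2
    have hSW : S.rep ∈ W := by
      rw [hmB, hℓ] at hSm; exact hSm.2
    have hWs : Submodule.span K {T.rep, S.rep} = W := by
      apply Submodule.eq_of_le_of_finrank_eq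
      · rw [Submodule.span_le]
        rintro x (rfl | rfl)
        · exact hTW
        · exact hSW
      · rw [hW, span_pair_finrank _ _ T.rep_nonzero (rep_ne T S hST.symm)]
    intro p
    have h1 : p ∈ m ↔ p ∈ B ∧ p ∈ lineTh T S := by
      rw [hmB, hℓ, ← hWs]; rfl
    rw [h1, mem_lineTh _ hN T S p _ _ kT kS hkT hkS hTN hSN]
    apply and_congr_right
    intro _
    constructor
    · rintro ⟨a, b, h⟩
      rw [h]; simp
    · intro h
      refine ⟨co (M * E') p 2 - co (M * E') p 1 * algebraMap F K γ, co (M * E') p 1, ?_⟩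
      rw [vec3_eq]
      simp [h]

lemma coords (q : ℕ) (hq4 : 4 ≤ q) (τ : K) (hτF : τ ∉ Set.range (algebraMap F K))
    (c0 c1 : K → F)
    (hc : ∀ x : K, x = algebraMap F K (c0 x) + algebraMap F K (c1 x) * τ)
    (B : Set (PP K 3)) (hB : IsBaerSubplane F B)
    (T : PP K 3) (hT : B ∩ linf K = {T})
    (m : Set (PP K 3)) (hm : IsLineOf q B m) (hTm : T ∈ m)
    (P : PP K 3) (hP : P ∈ linf K) (hPT : P ≠ T) :
    ∃ (N : Matrix (Fin 3) (Fin 3) K) (ε : K), IsUnit N.det ∧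
      ε ∉ Set.range (algebraMap F K) ∧
      B = mimg N (subplaneVecs F K) ∧
      (∀ p : PP K 3, p ∈ linf K ↔ co N p 0 = ε * co N p 1) ∧
      (∃ k : K, k ≠ 0 ∧ co N P = k • ![ε, 1, 0]) ∧
      (∃ k : K, k ≠ 0 ∧ co N T = k • ![0, 0, 1]) ∧
      (∀ p, p ∈ m ↔ p ∈ B ∧ co N p 0 = 0) := by
  obtain ⟨M, hM, hBM⟩ := hB
  obtain ⟨ℓ, hm⟩ := hm
  have hTB : T ∈ B ∩ linf K := by rw [hT]; rfl
  obtain ⟨wT, hwT0, kT, hkT, hwT⟩ := (mem_sub M hM T).1 (hBM ▸ hTB.1)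
  have hker : ∀ w : Fin 3 → F, (M.mulVec (algVec F w)) 2 = 0 → ∃ a : F, w = a • wT := by
    intro w hw
    by_cases hw0 : w = 0
    · exact ⟨0, by simp [hw0]⟩
    obtain ⟨p, k, hk, hp⟩ := exists_pt M hM (algVec F w) (by
      intro h; apply hw0; ext i; simpa [algVec] using congrFun h i)
    have hpT : p ∈ B ∩ linf K := by
      refine ⟨?_, ?_⟩
      · rw [hBM, mem_sub M hM]
        exact ⟨w, hw0, k, hk, hp⟩
      · show p.rep 2 = 0
        rw [← mul_co M hM p, hp, Matrix.mulVec_smul]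
        simp [hw]
    rw [hT, Set.mem_singleton_iff] at hpT
    subst hpT
    rw [hp] at hwT
    obtain ⟨i, hi⟩ := Function.ne_iff.1 hwT0
    have hi' : algebraMap F K (wT i) ≠ 0 := by simpa using hi
    have hkk : k * algebraMap F K (w i) = kT * algebraMap F K (wT i) := by
      simpa [algVec] using congrFun hwT i
    refine ⟨w i / wT i, ?_⟩
    ext l
    have hl : k * algebraMap F K (w l) = kT * algebraMap F K (wT l) := by
      simpa [algVec] using congrFun hwT l
    apply (algebraMap F K).injective
    simp only [Pi.smul_apply, smul_eq_mul, map_mul, map_div₀]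
    field_simp
    apply mul_left_cancel₀ (mul_ne_zero hk hkT)
    linear_combination kT * algebraMap F K (wT i) * hl - kT * algebraMap F K (wT l) * hkk
  have hS : ∃ S ∈ m, S ≠ T := by
    apply Set.exists_ne_of_one_lt_ncard
    rw [hm.2.2]; omega
  obtain ⟨S, hSm, hST⟩ := hS
  have hSB : S ∈ B := by
    have := hm.2.1 ▸ hSm
    exact this.1
  obtain ⟨wS, hwS0, kS, hkS, hwS⟩ := (mem_sub M hM S).1 (hBM ▸ hSB)
  set p0 : Fin 3 → F := fun i => c0 (co M P i) with hp0
  set p1 : Fin 3 → F := fun i => c1 (co M P i) with hp1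
  have hpp : co M P = algVec F p0 + τ • algVec F p1 := by
    ext i
    simp only [Pi.add_apply, Pi.smul_apply, smul_eq_mul, algVec, hp0, hp1]
    rw [mul_comm τ]
    exact hc _
  have hτ0 : τ ≠ 0 := by
    rintro rfl
    exact hτF ⟨0, by simp⟩
  have hgP : (M.mulVec (algVec F p0)) 2 + τ * (M.mulVec (algVec F p1)) 2 = 0 := by
    have h1 : P.rep 2 = 0 := hP
    rw [← mul_co M hM P, hpp, Matrix.mulVec_add, Matrix.mulVec_smul] at h1
    simpa using h1
  have hg1 : (M.mulVec (algVec F p1)) 2 ≠ 0 := by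
    intro h
    rw [h] at hgP
    obtain ⟨a, ha⟩ := hker p1 h
    obtain ⟨b, hb⟩ := hker p0 (by simpa using hgP)
    apply hPT
    apply co_ext M hM P T ((τ * algebraMap F K a + algebraMap F K b) / kT)
    rw [hpp, hwT, smul_smul, div_mul_cancel₀ _ hkT, ha, hb, vec3_eq]
    simp [algVec]
    refine ⟨?_, ?_, ?_⟩ <;> ring
  obtain ⟨α, β, γ, hS⟩ : ∃ α β γ : F, wS = (α • p0 + β • p1) + γ • wT := by
    have h := hc ((M.mulVec (algVec F wS)) 2 / (M.mulVec (algVec F p1)) 2)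
    set a := c0 ((M.mulVec (algVec F wS)) 2 / (M.mulVec (algVec F p1)) 2)
    set b := c1 ((M.mulVec (algVec F wS)) 2 / (M.mulVec (algVec F p1)) 2)
    rw [div_eq_iff hg1] at h
    obtain ⟨γ, hγ⟩ := hker (wS - a • p1 + b • p0) (by
      have : (algVec F (wS - a • p1 + b • p0) : Fin 3 → K) = algVec F wS
        - algebraMap F K a • algVec F p1 + algebraMap F K b • algVec F p0 := by
        ext i
        simp [algVec, Algebra.smul_def]
      rw [this, Matrix.mulVec_add, Matrix.mulVec_sub, Matrix.mulVec_smul, Matrix.mulVec_smul]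
      simp only [Pi.add_apply, Pi.sub_apply, Pi.smul_apply, smul_eq_mul]
      linear_combination h + algebraMap F K b * hgP)
    refine ⟨-b, a, γ, ?_⟩
    rw [← hγ]
    module
  rw [hS] at hwS
  by_cases hβ : β = 0
  · have hα : α ≠ 0 := by
      rintro rfl
      apply hST
      apply co_ext M hM S T (kS * algebraMap F K γ / kT)
      rw [hwS, hwT, smul_smul, div_mul_cancel₀ _ hkT, hβ, vec3_eq]
      simp [algVec]
      refine ⟨?_, ?_, ?_⟩ <;> ring
    have hα' : algebraMap F K α ≠ 0 := by simpa using hα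
    have hε : algebraMap F K α * τ ∉ Set.range (algebraMap F K) := by
      rintro ⟨x, hx⟩
      apply hτF
      refine ⟨x / α, ?_⟩
      rw [map_div₀, hx]; field_simp
    obtain ⟨N, h1, h2⟩ := coords_aux q M hM B hBM T hT m ℓ hm hTm P hP hPT wT kT hkT hwT hker
      S hSm hST p1 (α • p0 + β • p1) (algebraMap F K α * τ) (algebraMap F K α)⁻¹
      (inv_ne_zero hα') hε (by
        rw [hpp, hβ]
        ext i
        simp [algVec]
        field_simp
        ring) kS hkS γ hwS
    exact ⟨N, _, h1, hε, h2⟩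
  · have hβ' : algebraMap F K β ≠ 0 := by simpa using hβ
    have hε : algebraMap F K β / τ - algebraMap F K α ∉ Set.range (algebraMap F K) := by
      rintro ⟨x, hx⟩
      apply hτF
      have h5 : algebraMap F K (x + α) * τ = algebraMap F K β := by
        rw [map_add, hx]; field_simp; ring
      have h6 : algebraMap F K (x + α) ≠ 0 := by
        intro h; rw [h, zero_mul] at h5; exact hβ' h5.symm
      refine ⟨β / (x + α), ?_⟩
      rw [map_div₀, ← h5]; field_simp
    obtain ⟨N, h1, h2⟩ := coords_aux q M hM B hBM T hT m ℓ hm hTm P hP hPT wT kT hkT hwT hker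
      S hSm hST p0 (α • p0 + β • p1) (algebraMap F K β / τ - algebraMap F K α)
      (τ / algebraMap F K β)
      (div_ne_zero hτ0 hβ') hε (by
        rw [hpp]
        ext i
        simp [algVec]
        field_simp
        ring) kS hkS γ hwS
    exact ⟨N, _, h1, hε, h2⟩
end
/-- For a Baer subplane `B` tangent to `ℓ∞` at `T̄`, a line `m` of `B` through `T̄`
and a point `P̄ ∈ ℓ∞ \ {T̄}`, there are `q` `ℓ∞`-Baer pencils with vertex `P̄` partitioning
the affine points of `PG(2,q²)`, and partitioning the affine points of `B` into `q-1`
`F_q`-conics through `T̄` (whose `F_{q²}`-extensions pass through `P̄`) together with the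
degenerate conic `m ∪ m_P`. -/
theorem statement_4
    {F K : Type} [Field F] [Field K] [Fintype F] [Fintype K] [Algebra F K]
    (q : ℕ) (hq : Fintype.card F = q) (hK : Fintype.card K = q ^ 2)
    (τ : K) (t0 t1 : F)
    (hτ : τ ^ 2 = algebraMap F K t1 * τ + algebraMap F K t0)
    (hτF : τ ∉ Set.range (algebraMap F K))
    (c0 c1 : K → F)
    (hc : ∀ x : K, x = algebraMap F K (c0 x) + algebraMap F K (c1 x) * τ)
    (hq4 : 4 ≤ q)
    (B : Set (PP K 3)) (hB : IsBaerSubplane F B)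
    (T : PP K 3) (hT : B ∩ linf K = {T})
    (m : Set (PP K 3)) (hm : IsLineOf q B m) (hTm : T ∈ m)
    (P : PP K 3) (hP : P ∈ linf K) (hPT : P ≠ T) :
    ∃ mP ℓP : Set (PP K 3), IsLineOfExt q B mP ℓP ∧ P ∈ ℓP ∧
    ∃ (Ks : Finset (Set (PP K 3))) (Cs : Finset (Set (PP K 3)))
      (cells : Finset (Set (PP K 3))),
      cells = insert ((m ∪ mP) \ linf K) (Cs.image (fun C => C \ linf K)) ∧
      Ks.card = q ∧
      (∀ 𝒦 ∈ Ks, IsLinfBaerPencil F 𝒦 P) ∧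
      (∀ A : PP K 3, A ∉ linf K → ∃! 𝒦, 𝒦 ∈ Ks ∧ A ∈ 𝒦) ∧
      Cs.card = q - 1 ∧
      (∀ C ∈ Cs, IsFqConic F C ∧ C ⊆ B ∧ T ∈ C ∧
        ∀ D : Set (PP K 3), IsFq2Conic D → C ⊆ D → P ∈ D) ∧
      (∀ A ∈ B, A ∉ linf K → ∃! c, c ∈ cells ∧ A ∈ c) ∧
      (∀ c ∈ cells, c ⊆ B \ linf K) ∧
      (∀ 𝒦 ∈ Ks, ((𝒦 ∩ B) \ linf K) ∈ cells) ∧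
      (∀ c ∈ cells, ∃ 𝒦 ∈ Ks, c = (𝒦 ∩ B) \ linf K) := by
  obtain ⟨N, ε, hN, hε, hBN, hlin, ⟨k, hk, hPN⟩, ⟨kT, hkT, hTN⟩, hmN⟩ :=
    coords q hq4 τ hτF c0 c1 hc B hB T hT m hm hTm P hP hPT
  obtain ⟨e', t, n, htr, hnm, he'F, hbas⟩ : ∃ (e' : K) (t n : F), ε + e' = algebraMap F K t ∧
      ε * e' = algebraMap F K n ∧ e' ∉ Set.range (algebraMap F K) ∧
      ∀ x : K, ∃ a b : F, x = algebraMap F K a + algebraMap F K b * e' := by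
    have h := hc ε
    set a := c0 ε
    set b := c1 ε
    have hb : algebraMap F K b ≠ 0 := by
      intro hb
      apply hε
      exact ⟨a, by rw [h, hb]; ring⟩
    refine ⟨algebraMap F K a + algebraMap F K b * (algebraMap F K t1 - τ), 2 * a + b * t1,
      a ^ 2 + a * b * t1 - b ^ 2 * t0, ?_, ?_, ?_, ?_⟩
    · rw [h]; simp only [map_add, map_mul, map_ofNat]; ring
    · rw [h]; simp only [map_add, map_sub, map_mul, map_pow]
      linear_combination (- algebraMap F K b ^ 2) * hτ
    · rintro ⟨x, hx⟩
      apply hτF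
      refine ⟨(a + b * t1 - x) / b, ?_⟩
      rw [map_div₀, div_eq_iff hb]
      simp only [map_add, map_sub, map_mul]
      rw [hx]; ring
    · intro x
      refine ⟨c0 x + c1 x * (a + b * t1) / b, - c1 x / b, ?_⟩
      simp only [map_add, map_mul, map_div₀, map_neg]
      conv_lhs => rw [hc x]
      field_simp
      ring
  have hε0 : ε ≠ 0 := by
    rintro rfl
    exact hε ⟨0, by simp⟩
  have he'0 : e' ≠ 0 := by
    rintro rfl
    exact he'F ⟨0, by simp⟩
  have hn : n ≠ 0 := by
    rintro rfl
    rw [map_zero] at hnm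
    exact mul_ne_zero hε0 he'0 hnm
  have hun : ∀ a b : F, algebraMap F K a + algebraMap F K b * e' = 0 → a = 0 := by
    intro a b h
    by_cases hb : b = 0
    · simpa [hb] using h
    · exfalso
      apply he'F
      have hb' : algebraMap F K b ≠ 0 := by simpa using hb
      refine ⟨- a / b, ?_⟩
      rw [map_div₀, div_eq_iff hb', map_neg]
      linear_combination -h
  have hquad : ε ^ 2 - algebraMap F K t * ε + algebraMap F K n = 0 := by
    rw [← htr, ← hnm]; ring
  have hcell := cell_iff N hN ε e' t n he'0 htr hnm hun hlin
  rw [← hBN] at hcell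
  refine ⟨B ∩ {p | co N p 2 = 0}, {p | co N p 2 = 0}, ⟨ell_flat N hN, rfl, ?_⟩, ?_, ?_⟩
  · rw [hBN, ell_card N hN, hq]
  · rw [Set.mem_ofPred_eq, hPN]; simp
  refine wrap q hq (linf K) B (fun c : F => pen F N ε e' c)
    (fun c : F => mimg (N * cmat c t n) (conicVecs (Set.range (algebraMap F K))))
    (m ∪ (B ∩ {p | co N p 2 = 0})) ?_ ?_ ?_ ?_ (fun 𝒦 => IsLinfBaerPencil F 𝒦 P)
    (fun C => IsFqConic F C ∧ C ⊆ B ∧ T ∈ C ∧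
        ∀ D : Set (PP K 3), IsFq2Conic D → C ⊆ D → P ∈ D) ?_ ?_
  · intro A hA
    exact pen_unique N ε e' hbas hun A (fun h => hA ((hlin A).2 h))
  · intro c
    obtain ⟨p, j, hj, hp⟩ := exists_pt N hN (algVec F ![1, 0, c]) (by
      intro h; simpa [algVec] using congrFun h 0)
    have := (hcell c p).2 ⟨_, j, hj, hp, by simp, by simp⟩
    exact ⟨p, this.1.2, this.2, this.1.1⟩
  · ext p
    rw [hcell]
    constructor
    · rintro ⟨w, j, hj, h, h1, h2⟩
      have hpB : p ∈ B := by
        rw [hBN, mem_sub N hN]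
        refine ⟨w, ?_, j, hj, h⟩
        rintro rfl
        simp at h1
      have hpl : p ∉ linf K := ((hcell 0 p).2 ⟨w, j, hj, h, h1, h2⟩).2
      refine ⟨?_, hpl⟩
      rw [zero_mul] at h2
      rcases mul_eq_zero.1 h2 with h2 | h2
      · right
        refine ⟨hpB, ?_⟩
        rw [Set.mem_ofPred_eq, h]; simp [algVec, h2]
      · left
        rw [hmN]
        refine ⟨hpB, ?_⟩
        rw [h]; simp [algVec, h2]
    · rintro ⟨h1, h2⟩
      have hpB : p ∈ B := by
        rcases h1 with h1 | h1
        · exact ((hmN p).1 h1).1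
        · exact h1.1
      have h3 := hpB
      rw [hBN, mem_sub N hN] at h3
      obtain ⟨w, hw, j, hj, h⟩ := h3
      refine ⟨w, j, hj, h, ?_, ?_⟩
      · intro h4
        apply h2
        rw [hlin, h]
        simp only [Pi.smul_apply, smul_eq_mul, algVec]
        rw [h4]; ring
      · rw [zero_mul]
        rcases h1 with h1 | h1
        · have h5 := ((hmN p).1 h1).2
          rw [h] at h5
          have : w 0 = 0 := by simpa [algVec, hj] using h5
          rw [this, mul_zero]
        · have h5 := h1.2
          rw [Set.mem_ofPred_eq, h] at h5
          have : w 2 = 0 := by simpa [algVec, hj] using h5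
          rw [this, zero_mul]
  · intro c hc0
    ext p
    rw [hcell, Set.mem_sdiff, mem_conic N hN c t n hc0 hn]
    constructor
    · rintro ⟨w, j, hj, h, h1, h2⟩
      refine ⟨?_, ((hcell c p).2 ⟨w, j, hj, h, h1, h2⟩).2⟩
      left
      have hw0 : w 0 ≠ 0 := by
        intro h0
        rw [h0] at h2 h1
        have : w 1 = 0 := by simpa [hc0, hn] using h2.symm
        rw [this] at h1
        simp at h1
      have hw0' : algebraMap F K (w 0) ≠ 0 := by simpa using hw0
      refine ⟨w 1 / w 0, j * algebraMap F K (w 0), mul_ne_zero hj hw0', ?_⟩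
      have h6 : w 2 = w 0 * (c * (1 - t * (w 1 / w 0) + n * (w 1 / w 0) ^ 2)) := by
        apply mul_right_cancel₀ hw0
        rw [h2]
        field_simp
      have h7 : w 1 = w 0 * (w 1 / w 0) := by field_simp
      rw [h, mul_smul, vec3_eq]
      refine ⟨?_, ?_, ?_⟩
      · show j * algebraMap F K (w 0) = j * (algebraMap F K (w 0) * 1)
        rw [mul_one]
      · show j * algebraMap F K (w 1) = j * (algebraMap F K (w 0) * algebraMap F K (w 1 / w 0))
        rw [← map_mul, ← h7]
      · show j * algebraMap F K (w 2) = j * (algebraMap F K (w 0) * algebraMap F K _)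
        rw [← map_mul, ← h6]
    · rintro ⟨⟨θ, j, hj, h⟩ | ⟨j, hj, h⟩, h2⟩
      · refine ⟨![1, θ, c * (1 - t * θ + n * θ ^ 2)], j, hj, ?_, ?_, ?_⟩
        · rw [h, vec3_eq]
          simp [algVec]
        · intro h3
          apply h2
          rw [hlin, h]
          simp at h3 ⊢
          linear_combination j * h3
        · simp
      · exfalso
        apply h2
        rw [hlin, h]
        simp
  · intro c
    exact pen_isPencil N hN ε e' he'0 hlin P k hk hPN c
  · intro c hc0
    refine ⟨⟨N * cmat c t n, ?_, rfl⟩, ?_, ?_, ?_⟩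
    · rw [Matrix.det_mul]; exact hN.mul (cmat_det c t n hc0 hn)
    · intro p hp
      rw [mem_conic N hN c t n hc0 hn] at hp
      rw [hBN, mem_sub N hN]
      rcases hp with ⟨θ, j, hj, h⟩ | ⟨j, hj, h⟩
      · refine ⟨![1, θ, c * (1 - t * θ + n * θ ^ 2)], ?_, j, hj, ?_⟩
        · intro h; simpa using congrFun h 0
        · rw [h, vec3_eq]
          simp [algVec]
      · refine ⟨![0, 0, 1], ?_, j, hj, ?_⟩
        · intro h; simpa using congrFun h 2
        · rw [h, vec3_eq]
          simp [algVec]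
    · rw [mem_conic N hN c t n hc0 hn]
      exact Or.inr ⟨kT, hkT, hTN⟩
    · intro D hD hCD
      exact conic_ext (by rw [hq]; exact hq4) N hN c t n hc0 hn ε hε0 hquad P k hk hPN D hD hCD

end BaerConics
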